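/- arXiv:0911.2171 — 2 statements merged into one kernel-verified Lean document; each statement's English description precedes it below -/
import Mathlib

section
/- An n×n real matrix M is a P-matrix if and only if for every sign pattern σ ∈ {−1,+1}ⁿ there exists a vector x ∈ ℝⁿ such that σ_i·x_i > 0 and σ_i·(Mx)_i > 0 for every i ∈ {1,…,n}. -/
/-!
The link between both sides is the Fiedler–Pták criterion: `A` is a P-matrix iff it reverses the
sign of no nonzero vector, i.e. `y i * (A y) i ≤ 0` for all `i` forces `y = 0`.

The principal minor of `A` on `s` is the determinant of the full-size matrix obtained from `A` by
replacing the rows outside `s` by rows of the identity. If `A` is a P-matrix, multilinearity in the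
rows shows that adding nonnegative numbers to the diagonal keeps these determinants positive, and a
vector reversed by `A` lies in the kernel of such a matrix. Conversely, if `A` reverses no nonzero
vector, the segment from the identity to the full-size matrix consists of nonsingular matrices, so
its determinant stays positive.

Being a P-matrix is invariant under transposition. A nonzero `y` whose sign is reversed by `Mᵀ` is
incompatible with a vector `x` for a suitable sign pattern, by computing `y ⬝ᵥ M x = Mᵀ y ⬝ᵥ x` in
two ways. In the other direction, if no `x` exists for `σ`, then Hahn–Banach separates the open
orthant of `σ` from its image under `M`, and the separating functional is a nonzero vector whose
sign is reversed by `Mᵀ`.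
-/

/-- A matrix is a Z-matrix if all its off-diagonal entries are nonpositive. -/
def IsZMatrix {n : ℕ} (M : Matrix (Fin n) (Fin n) ℝ) : Prop :=
  ∀ i j, i ≠ j → M i j ≤ 0

/-- A matrix is a P-matrix if all its principal minors are positive. -/
def IsPMatrix {n : ℕ} (M : Matrix (Fin n) (Fin n) ℝ) : Prop :=
  ∀ s : Finset (Fin n), s.Nonempty →
    0 < (M.submatrix (fun i : s => (i : Fin n)) (fun j : s => (j : Fin n))).det

open Matrix

/-- The matrix `A + diagonal d` with the rows outside `s` replaced by rows of the identity. For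
`d = 0` its determinant is the principal minor of `A` on `s`. -/
def rowMix {n : ℕ} (A : Matrix (Fin n) (Fin n) ℝ) (d : Fin n → ℝ) (s : Finset (Fin n)) :
    Matrix (Fin n) (Fin n) ℝ :=
  fun i => if i ∈ s then A i + d i • (1 : Matrix (Fin n) (Fin n) ℝ) i else (1 : Matrix _ _ ℝ) i

lemma det_rowMix_zero {n : ℕ} (A : Matrix (Fin n) (Fin n) ℝ) (s : Finset (Fin n)) :
    (rowMix A 0 s).det =
      (A.submatrix (fun i : s => (i : Fin n)) (fun j : s => (j : Fin n))).det := by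
  rw [Matrix.twoBlockTriangular_det (rowMix A 0 s) (fun i => i ∈ s)]
  · have h1 : (rowMix A 0 s).toSquareBlockProp (fun i => i ∈ s) =
        A.submatrix (fun i : s => (i : Fin n)) (fun j : s => (j : Fin n)) := by
      ext i j
      simp [rowMix, Matrix.toSquareBlockProp_def]
    have h2 : (rowMix A 0 s).toSquareBlockProp (fun i => ¬ i ∈ s) = 1 := by
      ext i j
      have := i.2
      simp [rowMix, Matrix.toSquareBlockProp_def, this, Matrix.one_apply, Subtype.ext_iff]
    rw [h1, h2, Matrix.det_one, mul_one]
    congr!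
  · intro i hi j hj
    have : i ≠ j := by rintro rfl; exact hi hj
    simp [rowMix, hi, this]

lemma isPMatrix_iff_rowMix {n : ℕ} (A : Matrix (Fin n) (Fin n) ℝ) :
    IsPMatrix A ↔ ∀ s, 0 < (rowMix A 0 s).det := by
  constructor
  · intro h s
    rcases s.eq_empty_or_nonempty with rfl | hs
    · have : rowMix A 0 ∅ = 1 := by ext i j; simp [rowMix]
      simp [this]
    · rw [det_rowMix_zero]; exact h s hs
  · intro h s _
    rw [← det_rowMix_zero]; exact h s

lemma isPMatrix_transpose {n : ℕ} {A : Matrix (Fin n) (Fin n) ℝ} (h : IsPMatrix A) :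
    IsPMatrix Aᵀ := by
  intro s hs
  have := h s hs
  rwa [← Matrix.det_transpose, Matrix.transpose_submatrix] at this

/-- Induction on the set `t` of diagonal entries that are changed: by linearity in row `a`, adding
`d a` to the diagonal entry at `a ∈ s` adds `d a` times the determinant for `s.erase a`. -/
lemma det_rowMix_pos {n : ℕ} {A : Matrix (Fin n) (Fin n) ℝ} (h : IsPMatrix A)
    {d : Fin n → ℝ} (hd : ∀ i, 0 ≤ d i) (t : Finset (Fin n)) :
    ∀ s, 0 < (rowMix A (fun i => if i ∈ t then d i else 0) s).det := by
  induction t using Finset.induction_on with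
  | empty =>
    intro s
    simpa [Pi.zero_def] using (isPMatrix_iff_rowMix A).1 h s
  | insert a t ha ih =>
    intro s
    set e : Fin n → ℝ := fun i => if i ∈ t then d i else 0 with he
    by_cases has : a ∈ s
    · have h1 : rowMix A (fun i => if i ∈ insert a t then d i else 0) s =
          (rowMix A e s).updateRow a (A a + d a • (1 : Matrix (Fin n) (Fin n) ℝ) a) := by
        ext i j
        by_cases hia : i = a
        · subst hia; simp [rowMix, has]
        · simp [rowMix, hia, he]
      have h2 : (rowMix A e s).updateRow a (A a) = rowMix A e s := by
        ext i j
        by_cases hia : i = a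
        · subst hia; simp [rowMix, has, he, ha]
        · simp [hia]
      have h3 : (rowMix A e s).updateRow a ((1 : Matrix (Fin n) (Fin n) ℝ) a) =
          rowMix A e (s.erase a) := by
        ext i j
        by_cases hia : i = a
        · subst hia; simp [rowMix]
        · simp [rowMix, hia]
      rw [h1, Matrix.det_updateRow_add, Matrix.det_updateRow_smul, h2, h3]
      exact add_pos_of_pos_of_nonneg (ih s) (mul_nonneg (hd a) (ih _).le)
    · have h1 : rowMix A (fun i => if i ∈ insert a t then d i else 0) s = rowMix A e s := by
        ext i j
        by_cases hia : i = a
        · subst hia; simp [rowMix, has]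
        · simp [rowMix, hia, he]
      rw [h1]; exact ih s

lemma rowMix_mulVec {n : ℕ} (A : Matrix (Fin n) (Fin n) ℝ) (d : Fin n → ℝ) (s : Finset (Fin n))
    (y : Fin n → ℝ) (i : Fin n) :
    (rowMix A d s *ᵥ y) i = if i ∈ s then (A *ᵥ y) i + d i * y i else y i := by
  have h1 : (1 : Matrix (Fin n) (Fin n) ℝ) i ⬝ᵥ y = y i := congrFun (Matrix.one_mulVec y) i
  change rowMix A d s i ⬝ᵥ y = _
  unfold rowMix
  split_ifs
  · rw [add_dotProduct, smul_dotProduct, h1]; rfl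
  · exact h1

/-- A P-matrix reverses the sign of no nonzero vector. -/
lemma eq_zero_of_sign_reversed {n : ℕ} {A : Matrix (Fin n) (Fin n) ℝ} (h : IsPMatrix A)
    {y : Fin n → ℝ} (hy : ∀ i, y i * (A *ᵥ y) i ≤ 0) : y = 0 := by
  -- On the support of `y` the vector `A y` equals `-d * y` with `d ≥ 0`; off the support `d = 0`
  -- by the convention for division by zero.
  have hd : ∀ i, 0 ≤ -((A *ᵥ y) i / y i) := by
    intro i
    rcases eq_or_ne (y i) 0 with h0 | h0
    · simp [h0]
    · rw [neg_nonneg, ← mul_div_mul_left _ _ h0]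
      exact div_nonpos_of_nonpos_of_nonneg (hy i) (mul_self_nonneg _)
  have hpos := det_rowMix_pos h hd Finset.univ (Finset.univ.filter fun i => y i ≠ 0)
  refine Matrix.eq_zero_of_mulVec_eq_zero hpos.ne' ?_
  ext i
  rw [rowMix_mulVec]
  by_cases hi : y i = 0
  · simp [hi]
  · simp [hi]

/-- A matrix reversing the sign of no nonzero vector is a P-matrix. -/
lemma isPMatrix_of_sign_reversed {n : ℕ} {A : Matrix (Fin n) (Fin n) ℝ}
    (h : ∀ y : Fin n → ℝ, (∀ i, y i * (A *ᵥ y) i ≤ 0) → y = 0) : IsPMatrix A := by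
  rw [isPMatrix_iff_rowMix]
  intro s
  set f : ℝ → ℝ := fun t => ((1 - t) • (1 : Matrix (Fin n) (Fin n) ℝ) + t • rowMix A 0 s).det
    with hf
  have hcont : Continuous f := by
    apply Continuous.matrix_det
    fun_prop
  have hne : ∀ t ∈ Set.Icc (0 : ℝ) 1, f t ≠ 0 := by
    rintro t ⟨ht0, ht1⟩ hft
    obtain ⟨z, hz, hz0⟩ := Matrix.exists_mulVec_eq_zero_iff.2 hft
    apply hz
    have key : ∀ i, (1 - t) * z i + t * (if i ∈ s then (A *ᵥ z) i else z i) = 0 := by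
      intro i
      have := congrFun hz0 i
      rw [Matrix.add_mulVec, Matrix.smul_mulVec, Matrix.smul_mulVec, Matrix.one_mulVec] at this
      simpa [rowMix_mulVec] using this
    rcases ht0.eq_or_lt with rfl | htpos
    · ext i; simpa using key i
    · apply h
      intro i
      have hk := key i
      split_ifs at hk with hi
      · by_contra! hc
        have h2 : (1 - t) * (z i * z i) + t * (z i * (A *ᵥ z) i) = 0 := by
          linear_combination z i * hk
        have h3 := mul_nonneg (sub_nonneg.2 ht1) (mul_self_nonneg (z i))
        have h4 := mul_pos htpos hc
        linarith
      · have : z i = 0 := by linarith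
        simp [this]
  have h0 : f 0 = 1 := by simp [hf]
  have h1 : f 1 = (rowMix A 0 s).det := by simp [hf]
  rw [← h1]
  by_contra! hneg
  obtain ⟨t, ht, hft⟩ := intermediate_value_Icc' (zero_le_one' ℝ) hcont.continuousOn
    (show (0 : ℝ) ∈ Set.Icc (f 1) (f 0) from ⟨hneg, by simp [h0]⟩)
  exact hne t ht hft

/-- If a linear functional is bounded below on the open orthant of `σ`, its coefficients
have the signs of `σ`. -/
lemma coeff_nonneg_of_bdd {n : ℕ} {σ : Fin n → ℝ} (hσ : ∀ i, σ i * σ i = 1)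
    {c : Fin n → ℝ} {u : ℝ} (hu : ∀ x : Fin n → ℝ, (∀ i, 0 < σ i * x i) → u ≤ c ⬝ᵥ x) (i : Fin n) :
    0 ≤ σ i * c i := by
  by_contra! hneg
  -- Along the ray `σ + t σ i e_i` the functional tends to `-∞`.
  have key : ∀ t : ℝ, 0 ≤ t → u ≤ c ⬝ᵥ σ + t * (σ i * c i) := by
    intro t ht
    have := hu (σ + Pi.single i (t * σ i)) (by
      intro j
      by_cases hj : j = i
      · subst hj
        have := hσ j
        simp only [Pi.add_apply, Pi.single_eq_same]
        nlinarith
      · simp [hj, hσ])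
    rw [dotProduct_add, dotProduct_single] at this
    linarith
  have h0 := key 0 le_rfl
  have h1 := key ((c ⬝ᵥ σ - u + 1) / -(σ i * c i))
    (div_nonneg (by linarith) (by linarith))
  have h2 : (c ⬝ᵥ σ - u + 1) / -(σ i * c i) * (σ i * c i) = -(c ⬝ᵥ σ - u + 1) := by
    have := hneg.ne
    rw [div_mul_eq_mul_div, mul_div_assoc, div_neg, div_self this, mul_neg_one]
  linarith

/-- A matrix is a P-matrix iff every orthant contains a vector x with Mx in the
same orthant (interiors). -/
theorem pmatrix_iff_sign_patterns {n : ℕ} (M : Matrix (Fin n) (Fin n) ℝ) :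
    IsPMatrix M ↔
      ∀ σ : Fin n → ℝ, (∀ i, σ i = 1 ∨ σ i = -1) →
        ∃ x : Fin n → ℝ, ∀ i, 0 < σ i * x i ∧ 0 < σ i * M.mulVec x i := by
  constructor
  · intro hP σ hσ1
    have hσ : ∀ i, σ i * σ i = 1 := fun i => by rcases hσ1 i with h | h <;> simp [h]
    by_contra! hno
    set B : Set (Fin n → ℝ) := {x | ∀ i, 0 < σ i * x i} with hB
    have hBc : Convex ℝ B := by
      intro x hx y hy a b ha hb hab i
      have e : σ i * (a • x + b • y) i = a * (σ i * x i) + b * (σ i * y i) := by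
        simp only [Pi.add_apply, Pi.smul_apply, smul_eq_mul]; ring
      rw [e]
      rcases ha.eq_or_lt with rfl | ha
      · have : b = 1 := by linarith
        simpa [this] using hy i
      · exact add_pos_of_pos_of_nonneg (mul_pos ha (hx i)) (mul_nonneg hb (hy i).le)
    have hBo : IsOpen B := by
      rw [hB, Set.ofPred_forall]
      exact isOpen_iInter_of_finite fun i => isOpen_lt continuous_const (by fun_prop)
    have hdisj : Disjoint (M.mulVecLin '' B) B := by
      rw [Set.disjoint_left]
      rintro _ ⟨x, hx, rfl⟩ hx2
      obtain ⟨i, hi⟩ := hno x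
      exact absurd (hx2 i) (not_lt.2 (hi (hx i)))
    obtain ⟨f, u, hfA, hfB⟩ : ∃ (f : (Fin n → ℝ) →L[ℝ] ℝ) (u : ℝ),
        (∀ a ∈ M.mulVecLin '' B, f a ≤ u) ∧ ∀ b ∈ B, u < f b := by
      obtain ⟨g, v, hgB, hgA⟩ :=
        geometric_hahn_banach_open hBc hBo (hBc.linear_image M.mulVecLin) hdisj.symm
      exact ⟨-g, -v, fun a ha => neg_le_neg (hgA a ha), fun b hb => neg_lt_neg (hgB b hb)⟩
    obtain ⟨y, hy⟩ : ∃ y : Fin n → ℝ, ∀ x, f x = y ⬝ᵥ x := by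
      refine ⟨fun i => f (Pi.single i 1), fun x => ?_⟩
      conv_lhs => rw [← Finset.univ_sum_single x]
      rw [map_sum, dotProduct]
      refine Finset.sum_congr rfl fun i _ => ?_
      rw [show Pi.single i (x i) = x i • (Pi.single i 1 : Fin n → ℝ) by
        rw [← Pi.single_smul, smul_eq_mul, mul_one], map_smul, smul_eq_mul, mul_comm]
    have hσB : σ ∈ B := fun i => by simp [hσ]
    have hc1 : ∀ i, 0 ≤ σ i * y i :=
      coeff_nonneg_of_bdd hσ (u := u) fun x hx => by rw [← hy]; exact (hfB x hx).le
    have hc2 : ∀ i, 0 ≤ σ i * (-(Mᵀ *ᵥ y)) i :=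
      coeff_nonneg_of_bdd hσ (u := -u) fun x hx => by
        have := hfA _ ⟨x, hx, rfl⟩
        rw [hy, Matrix.mulVecLin_apply, dotProduct_mulVec] at this
        rw [neg_dotProduct, mulVec_transpose]
        linarith
    have hy0 : y = 0 := eq_zero_of_sign_reversed (isPMatrix_transpose hP) fun i => by
      have h1 := mul_nonneg (hc1 i) (hc2 i)
      have h2 : σ i * y i * (σ i * (-(Mᵀ *ᵥ y)) i) = -(y i * (Mᵀ *ᵥ y) i) := by
        rw [Pi.neg_apply]
        linear_combination (-(y i * (Mᵀ *ᵥ y) i)) * hσ i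
      linarith
    have h1 := hfA _ ⟨σ, hσB, rfl⟩
    have h2 := hfB _ hσB
    rw [hy, hy0, zero_dotProduct] at h1 h2
    linarith
  · intro h
    rw [← Matrix.transpose_transpose M]
    refine isPMatrix_transpose (isPMatrix_of_sign_reversed fun y hy => ?_)
    by_contra hy0
    -- The pattern follows `y` on its support and opposes `Mᵀ y` elsewhere.
    obtain ⟨x, hx⟩ := h
      (fun i => if 0 < y i ∨ (y i = 0 ∧ (Mᵀ *ᵥ y) i ≤ 0) then 1 else -1)
      (fun i => by split_ifs <;> simp)
    have hterm : ∀ i, 0 ≤ y i * (M *ᵥ x) i ∧ (y i ≠ 0 → 0 < y i * (M *ᵥ x) i) ∧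
        (Mᵀ *ᵥ y) i * x i ≤ 0 := by
      intro i
      obtain ⟨h1, h2⟩ := hx i
      have h3 := hy i
      rcases lt_trichotomy (y i) 0 with hlt | heq | hgt
      · have hc : ¬ (0 < y i ∨ (y i = 0 ∧ (Mᵀ *ᵥ y) i ≤ 0)) := by
          rintro (h | ⟨h, _⟩) <;> linarith
        rw [if_neg hc] at h1 h2
        have h4 : 0 < y i * (M *ᵥ x) i := mul_pos_of_neg_of_neg hlt (by linarith)
        have h5 : 0 ≤ (Mᵀ *ᵥ y) i := by
          by_contra! hc
          linarith [mul_pos_of_neg_of_neg hlt hc]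
        exact ⟨h4.le, fun _ => h4, mul_nonpos_of_nonneg_of_nonpos h5 (by linarith)⟩
      · refine ⟨by simp [heq], fun h => absurd heq h, ?_⟩
        rcases le_or_gt ((Mᵀ *ᵥ y) i) 0 with hm | hm
        · rw [if_pos (Or.inr ⟨heq, hm⟩)] at h1
          exact mul_nonpos_of_nonpos_of_nonneg hm (by linarith)
        · rw [if_neg (by rintro (h | ⟨_, h⟩) <;> linarith)] at h1
          exact mul_nonpos_of_nonneg_of_nonpos hm.le (by linarith)
      · rw [if_pos (Or.inl hgt)] at h1 h2
        have h4 : 0 < y i * (M *ᵥ x) i := mul_pos hgt (by linarith)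
        have h5 : (Mᵀ *ᵥ y) i ≤ 0 := by
          by_contra! hc
          linarith [mul_pos hgt hc]
        exact ⟨h4.le, fun _ => h4, mul_nonpos_of_nonpos_of_nonneg h5 (by linarith)⟩
    obtain ⟨i, hi⟩ := Function.ne_iff.1 hy0
    have hpos : 0 < y ⬝ᵥ M *ᵥ x :=
      Finset.sum_pos' (fun j _ => (hterm j).1) ⟨i, Finset.mem_univ i, (hterm i).2.1 hi⟩
    have hneg : Mᵀ *ᵥ y ⬝ᵥ x ≤ 0 := Finset.sum_nonpos fun j _ => (hterm j).2.2
    rw [dotProduct_mulVec, ← mulVec_transpose] at hpos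
    linarith
end

section
/- Let 𝒱 be an LCP-realizable oriented matroid on E_{2n} with realization matrix M ∈ ℝ^{n×n}. Then 𝒱 is a K-matroid if and only if M is a K-matrix. -/
/-- The support of a sign vector. -/
def supp {E : Type*} (X : E → SignType) : Set E := {e | X e ≠ 0}

/-- The positive part of a sign vector. -/
def posPart {E : Type*} (X : E → SignType) : Set E := {e | X e = 1}

/-- The negative part of a sign vector. -/
def negPart {E : Type*} (X : E → SignType) : Set E := {e | X e = -1}

/-- Composition of sign vectors. -/
def sComp {E : Type*} (X Y : E → SignType) : E → SignType :=
  fun e => if X e = 0 then Y e else X e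

/-- The vector axioms of an oriented matroid. -/
def IsOM {E : Type*} (V : Set (E → SignType)) : Prop :=
  (0 : E → SignType) ∈ V ∧
  (∀ X ∈ V, -X ∈ V) ∧
  (∀ X ∈ V, ∀ Y ∈ V, sComp X Y ∈ V) ∧
  (∀ X ∈ V, ∀ Y ∈ V, ∀ e, X e = 1 → Y e = -1 →
    ∃ Z ∈ V, Z e = 0 ∧
      posPart Z ⊆ posPart X ∪ posPart Y ∧
      negPart Z ⊆ negPart X ∪ negPart Y ∧
      (supp X \ supp Y) ∪ (supp Y \ supp X) ∪ (posPart X ∩ posPart Y) ∪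
        (negPart X ∩ negPart Y) ⊆ supp Z)

/-- A circuit: a nonzero vector of minimal nonempty support. -/
def IsCircuit {E : Type*} (V : Set (E → SignType)) (C : E → SignType) : Prop :=
  C ∈ V ∧ C ≠ 0 ∧ ∀ X ∈ V, X ≠ 0 → ¬ (supp X ⊂ supp C)

/-- Orthogonality of sign vectors. -/
def Orthogonal {E : Type*} (X Y : E → SignType) : Prop :=
  (Set.range (fun e => X e * Y e)) = {0} ∨
  ((1 : SignType) ∈ Set.range (fun e => X e * Y e) ∧
   (-1 : SignType) ∈ Set.range (fun e => X e * Y e))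

/-- The covectors: all sign vectors orthogonal to every vector. -/
def covectors {E : Type*} (V : Set (E → SignType)) : Set (E → SignType) :=
  {Y | ∀ X ∈ V, Orthogonal X Y}

/-- A basis: an inclusion-maximal set containing the support of no circuit. -/
def IsBasis {E : Type*} (V : Set (E → SignType)) (B : Set E) : Prop :=
  (∀ C, IsCircuit V C → ¬ supp C ⊆ B) ∧
  ∀ B' : Set E, B ⊂ B' → ∃ C, IsCircuit V C ∧ supp C ⊆ B'

/-- Sign-reversing sign vector. -/
def SignReversing {E : Type*} (bar : E → E) (X : E → SignType) : Prop :=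
  ∀ e, X e * X (bar e) ≤ 0

/-- Totally sign-reversing sign vector. -/
def TotallySignReversing {E : Type*} (bar : E → E) (X : E → SignType) : Prop :=
  SignReversing bar X ∧ supp X = Set.univ

/-- Sign-preserving sign vector. -/
def SignPreserving {E : Type*} (bar : E → E) (X : E → SignType) : Prop :=
  ∀ e, 0 ≤ X e * X (bar e)

/-- Totally sign-preserving sign vector. -/
def TotallySignPreserving {E : Type*} (bar : E → E) (X : E → SignType) : Prop :=
  SignPreserving bar X ∧ supp X = Set.univ

/-- A P-matroid: an oriented matroid with no sign-reversing circuit. -/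
def IsPMatroid {E : Type*} (bar : E → E) (V : Set (E → SignType)) : Prop :=
  IsOM V ∧ ∀ C, IsCircuit V C → ¬ SignReversing bar C

/-- A Z-matroid. -/
def IsZMatroid {E : Type*} (bar : E → E) (S T : Set E) (V : Set (E → SignType)) : Prop :=
  IsOM V ∧ ∀ C, IsCircuit V C → (∀ f ∈ T, 0 ≤ C f) → ∀ e ∈ S, C e = 1 → C (bar e) = 1

/-- A K-matroid: both a P-matroid and a Z-matroid. -/
def IsKMatroid {E : Type*} (bar : E → E) (S T : Set E) (V : Set (E → SignType)) : Prop :=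
  IsPMatroid bar V ∧ IsZMatroid bar S T V

/-- The ground structure E_{2n}: a fixed-point-free involution `bar` and a
partition into two n-element sets S, T with bar mapping S into T. -/
structure IsGround {E : Type*} (bar : E → E) (S T : Set E) (n : ℕ) : Prop where
  inv : ∀ e, bar (bar e) = e
  ff : ∀ e, bar e ≠ e
  union_eq : S ∪ T = Set.univ
  disj : Disjoint S T
  cardS : S.ncard = n
  cardT : T.ncard = n
  barS : ∀ e ∈ S, bar e ∈ T

/-- `V` is the LCP-realizable oriented matroid on `Fin n ⊕ Fin n` (the left
summand playing the role of S = {1,…,n}, the right summand that of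
T = {n+1,…,2n}, with the involution swapping the two copies) realized by `M`,
i.e. `V = { sgn x : [Iₙ −M] x = 0 }`. -/
def Realizes {n : ℕ} (M : Matrix (Fin n) (Fin n) ℝ)
    (V : Set (Fin n ⊕ Fin n → SignType)) : Prop :=
  V = { X | ∃ x : Fin n ⊕ Fin n → ℝ,
        (∀ i, x (Sum.inl i) = M.mulVec (fun j => x (Sum.inr j)) i) ∧
        ∀ e, X e = SignType.sign (x e) }

/-- A K-matrix is a matrix that is both a P-matrix and a Z-matrix. -/
def IsKMatrix {n : ℕ} (M : Matrix (Fin n) (Fin n) ℝ) : Prop :=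
  IsPMatrix M ∧ IsZMatrix M

/-! ### Fiedler–Pták characterization of P-matrices -/

/-- The matrix obtained from `A` by replacing the rows outside `s` by unit rows. -/
def replaceRows {n : ℕ} (A : Matrix (Fin n) (Fin n) ℝ) (s : Finset (Fin n)) :
    Matrix (Fin n) (Fin n) ℝ :=
  Matrix.of fun i j => if i ∈ s then A i j else (1 : Matrix (Fin n) (Fin n) ℝ) i j

/-- The principal minors of `A` are the determinants of the matrices `replaceRows A s`, which are
block triangular with an identity block. -/
lemma det_replaceRows {n : ℕ} (A : Matrix (Fin n) (Fin n) ℝ) (s : Finset (Fin n)) :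
    (replaceRows A s).det =
      (A.submatrix (fun i : s => (i : Fin n)) (fun j : s => (j : Fin n))).det := by
  rw [Matrix.twoBlockTriangular_det _ (· ∈ s)]
  · have h1 : Matrix.toSquareBlockProp (replaceRows A s) (· ∈ s)
        = A.submatrix (fun i : s => (i : Fin n)) (fun j : s => (j : Fin n)) := by
      ext i j
      simp [replaceRows, Matrix.toSquareBlockProp, i.2]
    have h2 : Matrix.toSquareBlockProp (replaceRows A s) (¬ · ∈ s) = 1 := by
      ext i j
      simp [replaceRows, Matrix.toSquareBlockProp, i.2, Matrix.one_apply, Subtype.ext_iff]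
    rw [h1, h2, Matrix.det_one, mul_one]
    congr!
  · intro i hi j hj
    have : i ≠ j := fun h => hi (h ▸ hj)
    simp [replaceRows, hi, Matrix.one_apply, this]

/-- A row-wise nonnegative, nontrivial combination of a P-matrix and the identity has positive
determinant. -/
lemma det_rows_pos {n : ℕ} {M : Matrix (Fin n) (Fin n) ℝ} (hM : IsPMatrix M)
    (a d : Fin n → ℝ) (ha : ∀ i, 0 ≤ a i) (hd : ∀ i, 0 ≤ d i) (had : ∀ i, 0 < a i + d i) :
    0 < (Matrix.diagonal a * M + Matrix.diagonal d).det := by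
  have key : (Matrix.diagonal a * M + Matrix.diagonal d).det =
      ∑ s : Finset (Fin n), (∏ i, s.piecewise a d i) *
        (M.submatrix (fun i : s => (i : Fin n)) (fun j : s => (j : Fin n))).det := by
    have h1 : (Matrix.diagonal a * M + Matrix.diagonal d).det =
        Matrix.detRowAlternating.toMultilinearMap
          ((fun i => a i • M i) + fun i => d i • (1 : Matrix (Fin n) (Fin n) ℝ) i) := by
      change _ = Matrix.det _
      congr 1
      ext i j
      simp [Matrix.diagonal_mul, Matrix.diagonal_apply, Matrix.one_apply]
    rw [h1, MultilinearMap.map_add_univ]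
    refine Finset.sum_congr rfl fun s _ => ?_
    rw [← det_replaceRows]
    have h2 : (s.piecewise (fun i => a i • M i)
        fun i => d i • (1 : Matrix (Fin n) (Fin n) ℝ) i) =
        fun i => s.piecewise a d i • replaceRows M s i := by
      funext i j
      by_cases hi : i ∈ s <;> simp [replaceRows, hi]
    rw [h2]
    exact Matrix.detRowAlternating.toMultilinearMap.map_smul_univ (s.piecewise a d)
      (replaceRows M s)
  have hminor : ∀ s : Finset (Fin n),
      0 < (M.submatrix (fun i : s => (i : Fin n)) (fun j : s => (j : Fin n))).det := by
    intro s
    rcases s.eq_empty_or_nonempty with rfl | hs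
    · simp
    · exact hM s hs
  rw [key]
  refine Finset.sum_pos' (fun s _ => mul_nonneg (Finset.prod_nonneg fun i _ => ?_) (hminor s).le)
    ⟨Finset.univ.filter (fun i => 0 < a i), Finset.mem_univ _,
      mul_pos (Finset.prod_pos fun i _ => ?_) (hminor _)⟩
  · by_cases hi : i ∈ s <;> simp [hi, ha, hd]
  · by_cases hi : 0 < a i
    · simp [Finset.piecewise, hi]
    · have := had i
      have := ha i
      have : 0 < d i := by linarith
      simp [Finset.piecewise, hi, this]

/-- A square matrix over any finite index type that reverses the sign of no nonzero vector has
positive determinant. -/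
lemma det_pos_of_not_reversing {ι : Type*} [Fintype ι] [DecidableEq ι] (A : Matrix ι ι ℝ)
    (h : ∀ z : ι → ℝ, z ≠ 0 → ∃ i, 0 < z i * A.mulVec z i) : 0 < A.det := by
  let B : ℝ → Matrix ι ι ℝ := fun t => (1 - t) • A + t • (1 : Matrix ι ι ℝ)
  have hne : ∀ t ∈ Set.Icc (0 : ℝ) 1, (B t).det ≠ 0 := by
    rintro t ⟨ht0, ht1⟩ hdet
    obtain ⟨z, hz, hBz⟩ := Matrix.exists_mulVec_eq_zero_iff.2 hdet
    obtain ⟨i, hi⟩ := h z hz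
    have h1 := congrFun hBz i
    simp only [B, Matrix.add_mulVec, Matrix.smul_mulVec, Matrix.one_mulVec, Pi.add_apply,
      Pi.smul_apply, smul_eq_mul, Pi.zero_apply] at h1
    have hzi : z i ≠ 0 := fun h0 => by simp [h0] at hi
    have h2 : 0 < z i * z i := mul_self_pos.2 hzi
    have h3 : (1 - t) * (z i * A.mulVec z i) + t * (z i * z i) = 0 := by
      linear_combination z i * h1
    rcases ht0.eq_or_lt with rfl | ht
    · simp at h3
      rcases h3 with h3 | h3 <;> simp [h3] at hi
    · nlinarith [mul_pos ht h2, mul_nonneg (sub_nonneg.2 ht1) hi.le]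
  have hcont : Continuous fun t => (B t).det := by
    apply Continuous.matrix_det
    fun_prop
  have hB0 : (B 0).det = A.det := by simp [B]
  have hB1 : (B 1).det = 1 := by simp [B]
  by_contra hneg
  obtain ⟨t, ht, ht0⟩ := intermediate_value_Icc zero_le_one hcont.continuousOn
    (show (0 : ℝ) ∈ Set.Icc (B 0).det (B 1).det from
      ⟨by rw [hB0]; exact not_lt.1 hneg, by rw [hB1]; exact zero_le_one⟩)
  exact hne t ht ht0

/-- The Fiedler–Pták characterization of P-matrices. -/
lemma isPMatrix_iff {n : ℕ} (M : Matrix (Fin n) (Fin n) ℝ) :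
    IsPMatrix M ↔ ∀ z : Fin n → ℝ, z ≠ 0 → ∃ i, 0 < z i * M.mulVec z i := by
  constructor
  · intro hM z hz
    by_contra! hrev
    have hpos := det_rows_pos hM (fun i => if z i = 0 then 0 else 1)
      (fun i => if z i = 0 then 1 else -(M.mulVec z i / z i))
      (fun i => by split_ifs <;> norm_num)
      (fun i => by
        split_ifs with hi
        · norm_num
        · rw [← mul_div_mul_left _ _ hi, ← neg_div]
          exact div_nonneg (by linarith [hrev i]) (mul_self_nonneg _))
      (fun i => by
        split_ifs with hi
        · norm_num
        · have : 0 ≤ -(M.mulVec z i / z i) := by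
            rw [← mul_div_mul_left _ _ hi, ← neg_div]
            exact div_nonneg (by linarith [hrev i]) (mul_self_nonneg _)
          linarith)
    refine hpos.ne' (Matrix.exists_mulVec_eq_zero_iff.1 ⟨z, hz, ?_⟩)
    funext i
    rw [Matrix.add_mulVec, ← Matrix.mulVec_mulVec, Pi.add_apply, Matrix.mulVec_diagonal,
      Matrix.mulVec_diagonal]
    by_cases hi : z i = 0
    · simp [hi]
    · simp [hi]
  · intro h s _
    apply det_pos_of_not_reversing
    intro z hz
    let w : Fin n → ℝ := fun i => if hi : i ∈ s then z ⟨i, hi⟩ else 0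
    have hw : w ≠ 0 := by
      intro h0
      apply hz
      funext i
      have := congrFun h0 i
      simpa [w] using this
    obtain ⟨i, hi⟩ := h w hw
    have his : i ∈ s := by
      by_contra hn
      simp [w, hn] at hi
    refine ⟨⟨i, his⟩, ?_⟩
    have hwi : w i = z ⟨i, his⟩ := by simp [w, his]
    have hMw : M.mulVec w i =
        (M.submatrix (fun i : s => (i : Fin n)) (fun j : s => (j : Fin n))).mulVec z ⟨i, his⟩ := by
      simp only [Matrix.mulVec, dotProduct, Matrix.submatrix_apply]
      rw [← Finset.sum_subset (Finset.subset_univ s) (fun j _ hj => by simp [w, hj]),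
        ← Finset.sum_coe_sort s]
      refine Finset.sum_congr rfl fun j _ => ?_
      simp [w]
    rwa [hwi, hMw] at hi

/-! ### Sign vectors and circuits of a linear subspace -/

/-- The subspace `{x : x_S = M x_T}`, i.e. the kernel of `[I, -M]`. -/
def kerLCP {n : ℕ} (M : Matrix (Fin n) (Fin n) ℝ) : Submodule ℝ (Fin n ⊕ Fin n → ℝ) where
  carrier := {x | ∀ i, x (Sum.inl i) = M.mulVec (fun j => x (Sum.inr j)) i}
  zero_mem' := by intro i; simp [Matrix.mulVec, dotProduct]
  add_mem' := by
    intro x y hx hy i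
    simp only [Set.mem_ofPred_eq, Matrix.mulVec, dotProduct, Pi.add_apply] at *
    rw [hx i, hy i, ← Finset.sum_add_distrib]
    exact Finset.sum_congr rfl fun j _ => by ring
  smul_mem' := by
    intro c x hx i
    simp only [Set.mem_ofPred_eq, Matrix.mulVec, dotProduct, Pi.smul_apply, smul_eq_mul] at *
    rw [hx i, Finset.mul_sum]
    exact Finset.sum_congr rfl fun j _ => by ring

/-- The sign vectors of a linear subspace. -/
def signSet {E : Type*} (L : Submodule ℝ (E → ℝ)) : Set (E → SignType) :=
  {X | ∃ x ∈ L, X = fun e => SignType.sign (x e)}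

/-- Composition of sign vectors is realized by a small positive perturbation. -/
lemma signSet_comp {E : Type*} [Finite E] (x y : E → ℝ) :
    ∃ ε : ℝ, ∀ e, SignType.sign (x e + ε * y e) =
      if SignType.sign (x e) = 0 then SignType.sign (y e) else SignType.sign (x e) := by
  suffices h : ∀ᶠ ε in nhdsWithin (0 : ℝ) (Set.Ioi 0), ∀ e, SignType.sign (x e + ε * y e) =
      if SignType.sign (x e) = 0 then SignType.sign (y e) else SignType.sign (x e) from h.exists
  rw [Filter.eventually_all]
  intro e
  have hc : Filter.Tendsto (fun ε : ℝ => x e + ε * y e) (nhdsWithin 0 (Set.Ioi 0))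
      (nhds (x e)) := by
    have : Continuous fun ε : ℝ => x e + ε * y e := by fun_prop
    have h := this.tendsto 0
    simp only [zero_mul, add_zero] at h
    exact h.mono_left nhdsWithin_le_nhds
  rcases lt_trichotomy (x e) 0 with h | h | h
  · filter_upwards [hc.eventually_lt_const h] with ε hε
    simp [sign_neg hε, sign_neg h]
  · filter_upwards [self_mem_nhdsWithin] with ε hε
    simp [h, sign_mul, sign_pos (Set.mem_Ioi.1 hε)]
  · filter_upwards [hc.eventually_const_lt h] with ε hε
    simp [sign_pos hε, sign_pos h]

lemma isOM_signSet {E : Type*} [Finite E] (L : Submodule ℝ (E → ℝ)) : IsOM (signSet L) := by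
  refine ⟨⟨0, L.zero_mem, by funext e; simp⟩, ?_, ?_, ?_⟩
  · rintro X ⟨x, hx, rfl⟩
    exact ⟨-x, L.neg_mem hx, by funext e; simp [Left.sign_neg]⟩
  · rintro X ⟨x, hx, rfl⟩ Y ⟨y, hy, rfl⟩
    obtain ⟨ε, hε⟩ := signSet_comp x y
    refine ⟨x + ε • y, L.add_mem hx (L.smul_mem _ hy), ?_⟩
    funext e
    simp only [sComp, Pi.add_apply, Pi.smul_apply, smul_eq_mul]
    exact (hε e).symm
  · rintro X ⟨x, hx, rfl⟩ Y ⟨y, hy, rfl⟩ e he1 he2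
    have hxe : 0 < x e := sign_eq_one_iff.1 he1
    have hye : 0 < -y e := neg_pos.2 (sign_eq_neg_one_iff.1 he2)
    refine ⟨_, ⟨(-y e) • x + x e • y, L.add_mem (L.smul_mem _ hx) (L.smul_mem _ hy), rfl⟩,
      ?_, ?_, ?_, ?_⟩
    · simp only [Pi.add_apply, Pi.smul_apply, smul_eq_mul, sign_eq_zero_iff]
      ring
    · intro f hf
      simp only [_root_.posPart, Set.mem_ofPred_eq, Set.mem_union, sign_eq_one_iff, Pi.add_apply,
        Pi.smul_apply, smul_eq_mul] at hf ⊢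
      by_contra! hcon
      nlinarith [mul_nonneg hye.le (neg_nonneg.2 hcon.1),
        mul_nonneg hxe.le (neg_nonneg.2 hcon.2)]
    · intro f hf
      simp only [_root_.negPart, Set.mem_ofPred_eq, Set.mem_union, sign_eq_neg_one_iff, Pi.add_apply,
        Pi.smul_apply, smul_eq_mul] at hf ⊢
      by_contra! hcon
      nlinarith [mul_nonneg hye.le hcon.1, mul_nonneg hxe.le hcon.2]
    · intro f hf
      simp only [supp, _root_.posPart, _root_.negPart, Set.mem_union, Set.mem_sdiff, Set.mem_inter_iff,
        Set.mem_ofPred_eq, sign_eq_one_iff, sign_eq_neg_one_iff, ne_eq, sign_eq_zero_iff, not_not,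
        Pi.add_apply, Pi.smul_apply, smul_eq_mul] at hf ⊢
      rcases hf with ((⟨h1, h2⟩ | ⟨h1, h2⟩) | ⟨h1, h2⟩) | ⟨h1, h2⟩
      · rw [h2, mul_zero, add_zero]
        exact mul_ne_zero hye.ne' h1
      · rw [h2, mul_zero, zero_add]
        exact mul_ne_zero hxe.ne' h1
      · exact (add_pos (mul_pos hye h1) (mul_pos hxe h2)).ne'
      · exact (add_neg (mul_neg_of_pos_of_neg hye h1) (mul_neg_of_pos_of_neg hxe h2)).ne

lemma supp_sign {E : Type*} (x : E → ℝ) :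
    supp (fun e => SignType.sign (x e)) = Function.support x := by
  ext e
  simp [supp]

/-- An element of smaller support can be subtracted off so that the result is, coordinatewise, a
nonnegative multiple of `x`, is nonzero, and has strictly smaller support than `x`. -/
lemma exists_conformal_smaller {E : Type*} [Finite E] (L : Submodule ℝ (E → ℝ))
    {x y : E → ℝ} (hx : x ∈ L) (hy : y ∈ L) (hy0 : y ≠ 0)
    (hyx : Function.support y ⊂ Function.support x) :
    ∃ z ∈ L, z ≠ 0 ∧ Function.support z ⊂ Function.support x ∧
      ∃ c : E → ℝ, (∀ e, 0 ≤ c e) ∧ ∀ e, z e = c e * x e := by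
  have hne : (Function.support y).Nonempty := Function.support_nonempty_iff.2 hy0
  -- The first coordinate to vanish along `x - t y`, in either direction of `t`.
  obtain ⟨e, he, hmin⟩ := Set.exists_min_image (Function.support y) (fun e => |x e| / |y e|)
    (Set.toFinite _) hne
  have hye : y e ≠ 0 := he
  have hxe : x e ≠ 0 := hyx.1 he
  have hbound : ∀ f, |x e / y e * y f| ≤ |x f| := by
    intro f
    by_cases hf : y f = 0
    · simp [hf]
    · have := hmin f hf
      rw [abs_mul, abs_div]
      exact (le_div_iff₀ (abs_pos.2 hf)).1 this
  have hz : ∀ f, (x - (x e / y e) • y) f = (1 - x e / y e * y f / x f) * x f := by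
    intro f
    by_cases hf : x f = 0
    · have : y f = 0 := by
        by_contra h
        exact hyx.1 h hf
      simp [hf, this]
    · simp only [Pi.sub_apply, Pi.smul_apply, smul_eq_mul]
      rw [sub_mul, one_mul, div_mul_cancel₀ _ hf]
  refine ⟨x - (x e / y e) • y, L.sub_mem hx (L.smul_mem _ hy), ?_, ?_, _, ?_, hz⟩
  · obtain ⟨f, hfx, hfy⟩ := Set.exists_of_ssubset hyx
    have hfy : y f = 0 := by simpa using hfy
    intro h0
    have := congrFun h0 f
    simp only [Pi.sub_apply, Pi.smul_apply, smul_eq_mul, hfy, mul_zero, sub_zero] at this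
    exact hfx this
  · refine (Set.ssubset_iff_of_subset ?_).2 ⟨e, hxe, ?_⟩
    · intro f hf hxf
      exact hf (by rw [hz f, hxf, mul_zero])
    · simp [hye]
  · intro f
    by_cases hf : x f = 0
    · simp [hf]
    · have h1 : |x e / y e * y f / x f| ≤ 1 := by
        rw [abs_div]
        exact div_le_one_of_le₀ (hbound f) (abs_nonneg _)
      linarith [(abs_le.1 h1).2]

/-- A subspace with a nonzero sign-reversing element has a sign-reversing circuit. -/
lemma exists_reversing_circuit {E : Type*} [Finite E] (bar : E → E) (L : Submodule ℝ (E → ℝ))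
    {x : E → ℝ} (hx : x ∈ L) (hx0 : x ≠ 0) (hrev : ∀ e, x e * x (bar e) ≤ 0) :
    ∃ C, IsCircuit (signSet L) C ∧ SignReversing bar C := by
  induction hk : (Function.support x).ncard using Nat.strong_induction_on generalizing x with
  | _ k ih =>
    by_cases hcirc : ∃ y ∈ L, y ≠ 0 ∧ Function.support y ⊂ Function.support x
    · obtain ⟨y, hy, hy0, hyx⟩ := hcirc
      obtain ⟨z, hz, hz0, hzx, c, hc, hzc⟩ := exists_conformal_smaller L hx hy hy0 hyx
      refine ih _ (hk ▸ Set.ncard_lt_ncard hzx (Set.toFinite _)) hz hz0 (fun e => ?_) rfl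
      rw [hzc, hzc, mul_mul_mul_comm]
      exact mul_nonpos_of_nonneg_of_nonpos (mul_nonneg (hc _) (hc _)) (hrev e)
    · refine ⟨fun e => SignType.sign (x e), ⟨⟨x, hx, rfl⟩, ?_, ?_⟩, ?_⟩
      · intro h0
        apply hx0
        funext e
        exact sign_eq_zero_iff.1 (congrFun h0 e)
      · rintro Y ⟨y, hy, rfl⟩ hY0 hss
        rw [supp_sign, supp_sign] at hss
        refine hcirc ⟨y, hy, ?_, hss⟩
        rintro rfl
        exact hY0 (by funext e; simp)
      · intro e
        rw [← sign_mul]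
        exact sign_nonpos_iff.2 (hrev e)

/-! ### P-matroids and Z-matroids from matrices -/

/-- The lift `(M z, z)` of `z` to the kernel of `[I, -M]`. -/
lemma elim_mem_kerLCP {n : ℕ} (M : Matrix (Fin n) (Fin n) ℝ) (z : Fin n → ℝ) :
    Sum.elim (M.mulVec z) z ∈ kerLCP M := fun _ => rfl

lemma isPMatroid_iff {n : ℕ} (M : Matrix (Fin n) (Fin n) ℝ) :
    IsPMatroid Sum.swap (signSet (kerLCP M)) ↔ IsPMatrix M := by
  rw [isPMatrix_iff]
  constructor
  · rintro ⟨-, hP⟩ z hz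
    by_contra! hrev
    obtain ⟨C, hC, hCrev⟩ := exists_reversing_circuit Sum.swap (kerLCP M) (elim_mem_kerLCP M z)
      (fun h => hz (by funext i; exact congrFun h (Sum.inr i)))
      (by
        rintro (i | i)
        · simpa [mul_comm] using hrev i
        · simpa using hrev i)
    exact hP C hC hCrev
  · refine fun h => ⟨isOM_signSet _, ?_⟩
    rintro C ⟨⟨x, hx, rfl⟩, hC0, -⟩ hrev
    have hxl : ∀ i, x (Sum.inl i) = M.mulVec (fun j => x (Sum.inr j)) i := hx
    have hz : (fun j => x (Sum.inr j)) ≠ 0 := by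
      intro h0
      apply hC0
      funext e
      rcases e with i | i
      · simp [hxl i, h0]
      · simp [show x (Sum.inr i) = 0 from congrFun h0 i]
    obtain ⟨i, hi⟩ := h _ hz
    rw [← hxl i] at hi
    have h1 := hrev (Sum.inr i)
    rw [← sign_mul, sign_nonpos_iff] at h1
    exact absurd hi (not_lt.2 h1)

/-- The lift of a unit vector gives a circuit. -/
lemma isCircuit_column {n : ℕ} (M : Matrix (Fin n) (Fin n) ℝ) (j : Fin n) :
    IsCircuit (signSet (kerLCP M))
      (fun e => SignType.sign (Sum.elim (M.mulVec (Pi.single j 1)) (Pi.single j (1 : ℝ)) e)) := by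
  refine ⟨⟨_, elim_mem_kerLCP M _, rfl⟩, ?_, ?_⟩
  · intro h
    have := congrFun h (Sum.inr j)
    simp at this
  · rintro Y ⟨y, hy, rfl⟩ hY0 hss
    rw [supp_sign, supp_sign] at hss
    have hyl : ∀ i, y (Sum.inl i) = M.mulVec (fun j => y (Sum.inr j)) i := hy
    have hyr : (fun k => y (Sum.inr k)) = y (Sum.inr j) • Pi.single j (1 : ℝ) := by
      funext k
      by_cases hk : k = j
      · simp [hk]
      · by_contra hne
        have : Sum.inr k ∈ Function.support y := by simpa [hk] using hne
        have := hss.1 this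
        simp [hk] at this
    have hyj : y (Sum.inr j) ≠ 0 := by
      intro h0
      rw [h0, zero_smul] at hyr
      apply hY0
      funext e
      rcases e with i | i
      · simp [hyl i, hyr]
      · simp [show y (Sum.inr i) = 0 from congrFun hyr i]
    -- `y` is a nonzero multiple of the lift of `e_j`, so the supports agree.
    refine hss.2 ?_
    rintro (i | i) hi
    · simp only [Function.mem_support, Sum.elim_inl] at hi ⊢
      rw [hyl, hyr, Matrix.mulVec_smul]
      exact mul_ne_zero hyj hi
    · simp only [Function.mem_support, Sum.elim_inr] at hi ⊢
      have : i = j := by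
        by_contra hne
        simp [hne] at hi
      rwa [this]

lemma isZMatroid_iff {n : ℕ} (M : Matrix (Fin n) (Fin n) ℝ) :
    IsZMatroid Sum.swap (Set.range Sum.inl) (Set.range Sum.inr) (signSet (kerLCP M)) ↔
      IsZMatrix M := by
  constructor
  · rintro ⟨-, hZ⟩ i j hij
    by_contra! hpos
    have h := hZ _ (isCircuit_column M j) ?_ (Sum.inl i) ⟨i, rfl⟩ ?_
    · simp [hij] at h
    · rintro _ ⟨k, rfl⟩
      rw [sign_nonneg_iff, Sum.elim_inr]
      by_cases hk : k = j <;> simp [hk]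
    · rw [sign_eq_one_iff]
      simpa using hpos
  · refine fun h => ⟨isOM_signSet _, ?_⟩
    rintro C ⟨⟨x, hx, rfl⟩, -, -⟩ hT _ ⟨i, rfl⟩ hi
    have hxl : x (Sum.inl i) = M.mulVec (fun j => x (Sum.inr j)) i := hx i
    have hnn : ∀ j, 0 ≤ x (Sum.inr j) := fun j =>
      (sign_nonneg_iff (a := x (Sum.inr j))).1 (hT _ ⟨j, rfl⟩)
    have hi : 0 < x (Sum.inl i) := sign_eq_one_iff.1 hi
    refine sign_eq_one_iff.2 (lt_of_le_of_ne (hnn i) fun h0 => ?_)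
    refine hi.not_ge ?_
    rw [hxl, Matrix.mulVec, dotProduct]
    refine Finset.sum_nonpos fun j _ => ?_
    by_cases hij : i = j
    · subst hij
      have h0' : x (Sum.inr i) = 0 := h0.symm
      exact (mul_eq_zero_of_right _ h0').le
    · exact mul_nonpos_of_nonpos_of_nonneg (h i j hij) (hnn j)

/-- An LCP-realizable oriented matroid is a K-matroid iff its realization
matrix is a K-matrix. -/
theorem kmatroid_iff_kmatrix {n : ℕ} (M : Matrix (Fin n) (Fin n) ℝ)
    (V : Set (Fin n ⊕ Fin n → SignType)) (hreal : Realizes M V) :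
    IsKMatroid Sum.swap (Set.range Sum.inl) (Set.range Sum.inr) V ↔ IsKMatrix M := by
  have hV : V = signSet (kerLCP M) := by
    rw [hreal]
    ext X
    exact exists_congr fun x => and_congr Iff.rfl funext_iff.symm
  rw [hV]
  exact and_congr (isPMatroid_iff M) (isZMatroid_iff M)
end
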